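/- The open set {(x,y) ∈ T_e° : φ₂ᵈ(x,y) + φ₁ᵈ(x,y) ≠ 0} has exactly 3 connected components. -/

import Mathlib

open Real

/-- The second (symmetric) Dirichlet eigenfunction of the equilateral triangle. -/
noncomputable def phi2D (x y : ℝ) : ℝ :=
  sin (2 * π * (5 * x + Real.sqrt 3 * y) / 3) - sin (2 * π * (5 * x - Real.sqrt 3 * y) / 3)
  + sin (2 * π * (x - 3 * Real.sqrt 3 * y) / 3) - sin (2 * π * (x + 3 * Real.sqrt 3 * y) / 3)
  + sin (4 * π * (2 * x + Real.sqrt 3 * y) / 3) - sin (4 * π * (2 * x - Real.sqrt 3 * y) / 3)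

/-- The first Dirichlet eigenfunction of the equilateral triangle. -/
noncomputable def phi1D (x y : ℝ) : ℝ :=
  2 * sin (2 * π * (x + y / Real.sqrt 3)) - 2 * sin (4 * π * y / Real.sqrt 3)
  - 2 * sin (2 * π * (x - y / Real.sqrt 3))

/-- The open equilateral triangle with vertices `(0,0)`, `(1,0)`, `(1/2, √3/2)`. -/
def openTriangle : Set (ℝ × ℝ) :=
  {p | 0 < p.2 ∧ p.2 < Real.sqrt 3 * p.1 ∧ p.1 + p.2 / Real.sqrt 3 < 1}

/-- A finite disjoint union of open connected sets has as many connected components as pieces. -/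
theorem card_connectedComponents_iUnion {X ι : Type*} [TopologicalSpace X] {S : Set X}
    (U : ι → Set X) (hS : S = ⋃ i, U i) (hopen : ∀ i, IsOpen (U i))
    (hconn : ∀ i, IsConnected (U i)) (hdisj : Pairwise fun i j => Disjoint (U i) (U j)) :
    Nat.card (ConnectedComponents ↥S) = Nat.card ι := by
  have hmem : ∀ p : S, ∃ i, (p : X) ∈ U i := fun p => by
    exact Set.mem_iUnion.1 (hS ▸ p.2 : (p : X) ∈ ⋃ i, U i)
  have hsub : ∀ i, U i ⊆ S := fun i => hS ▸ Set.subset_iUnion U i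
  choose f hf using hmem
  have hfeq : ∀ (p : S) i, (p : X) ∈ U i → f p = i := fun p i hi => by
    by_contra hne
    exact Set.disjoint_left.1 (hdisj hne) (hf p) hi
  let _ : TopologicalSpace ι := ⊥
  have : DiscreteTopology ι := ⟨rfl⟩
  have hcont : Continuous f := by
    refine continuous_discrete_rng.2 fun i => ?_
    have : f ⁻¹' {i} = Subtype.val ⁻¹' U i := by
      ext p
      exact ⟨fun h => by have := hf p; rwa [show f p = i from h] at this, hfeq p i⟩
    rw [this]
    exact (hopen i).preimage continuous_subtype_val
  refine Nat.card_congr (Equiv.ofBijective hcont.connectedComponentsLift ⟨?_, ?_⟩)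
  · intro a b
    obtain ⟨p, rfl⟩ := ConnectedComponents.surjective_coe a
    obtain ⟨q, rfl⟩ := ConnectedComponents.surjective_coe b
    intro hpq
    simp only [Continuous.connectedComponentsLift_apply_coe] at hpq
    rw [ConnectedComponents.coe_eq_coe']
    have hpre : IsPreconnected (Subtype.val ⁻¹' U (f q) : Set S) := by
      refine Topology.IsInducing.subtypeVal.isPreconnected_image.1 ?_
      rw [Subtype.image_preimage_coe, Set.inter_eq_right.2 (hsub _)]
      exact (hconn _).isPreconnected
    exact hpre.subset_connectedComponent (hf q) (show (p : X) ∈ U (f q) from hpq ▸ hf p)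
  · intro i
    obtain ⟨x, hx⟩ := (hconn i).nonempty
    exact ⟨((⟨x, hsub i hx⟩ : S) : ConnectedComponents S), hfeq _ _ hx⟩

/-- Trigonometric factorization underlying that of `phi2D + phi1D`. -/
theorem sum_sin_eq_prod (u v : ℝ) :
    sin (10 * u + 2 * v) - sin (10 * u - 2 * v) + sin (2 * u - 6 * v) - sin (2 * u + 6 * v)
      + sin (8 * u + 4 * v) - sin (8 * u - 4 * v)
      + (2 * sin (6 * u + 2 * v) - 2 * sin (4 * v) - 2 * sin (6 * u - 2 * v))
    = -32 * (sin (2 * v) * sin (3 * u - v) * sin (3 * u + v)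
        * (cos (u + v) * cos (u - v) * cos (2 * u))) := by
  have hsin : sin (6 * u + 2 * v) - sin (4 * v) - sin (6 * u - 2 * v)
      = -4 * (sin (2 * v) * sin (3 * u - v) * sin (3 * u + v)) := by
    rw [show 6 * u + 2 * v = 2 * (3 * u) + 2 * v by ring,
      show 6 * u - 2 * v = 2 * (3 * u) - 2 * v by ring, show 4 * v = 2 * (2 * v) by ring]
    simp only [sin_add, sin_sub, sin_two_mul, cos_two_mul]
    linear_combination (8 * sin v * cos v ^ 3) * sin_sq_add_cos_sq (3 * u)
      - (8 * sin v * cos v * cos (3 * u) ^ 2) * sin_sq_add_cos_sq v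
  have hcos : 1 + cos (2 * u + 2 * v) + cos (2 * u - 2 * v) + cos (4 * u)
      = 4 * (cos (u + v) * cos (u - v) * cos (2 * u)) := by
    rw [show 4 * u = 2 * (2 * u) by ring]
    simp only [cos_add, cos_sub, cos_two_mul]
    linear_combination 4 * (2 * cos u ^ 2 - 1) * (sin v ^ 2 * sin_sq_add_cos_sq u
      + (1 - cos u ^ 2) * sin_sq_add_cos_sq v)
  have key : ∀ A B : ℝ, 2 * (sin A * cos B) = sin (A + B) + sin (A - B) := fun A B => by
    rw [sin_add, sin_sub]; ring
  have hprod : sin (10 * u + 2 * v) - sin (10 * u - 2 * v) + sin (2 * u - 6 * v)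
      - sin (2 * u + 6 * v) + sin (8 * u + 4 * v) - sin (8 * u - 4 * v)
      = 2 * (sin (6 * u + 2 * v) - sin (4 * v) - sin (6 * u - 2 * v))
        * (cos (2 * u + 2 * v) + cos (2 * u - 2 * v) + cos (4 * u)) := by
    have e1 := key (6 * u + 2 * v) (2 * u + 2 * v)
    have e2 := key (6 * u + 2 * v) (2 * u - 2 * v)
    have e3 := key (6 * u + 2 * v) (4 * u)
    have e4 := key (4 * v) (2 * u + 2 * v)
    have e5 := key (4 * v) (2 * u - 2 * v)
    have e6 := key (4 * v) (4 * u)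
    have e7 := key (6 * u - 2 * v) (2 * u + 2 * v)
    have e8 := key (6 * u - 2 * v) (2 * u - 2 * v)
    have e9 := key (6 * u - 2 * v) (4 * u)
    have n1 := sin_neg (2 * u - 2 * v)
    have n2 := sin_neg (2 * u - 6 * v)
    have n3 := sin_neg (4 * u - 4 * v)
    ring_nf at e1 e2 e3 e4 e5 e6 e7 e8 e9 n1 n2 n3 ⊢
    linarith
  calc _ = 2 * (sin (6 * u + 2 * v) - sin (4 * v) - sin (6 * u - 2 * v))
        * (1 + cos (2 * u + 2 * v) + cos (2 * u - 2 * v) + cos (4 * u)) := by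
        linear_combination hprod
    _ = _ := by rw [hsin, hcos]; ring

/-- `phi2D + phi1D` is a product of sines and cosines. -/
theorem phi2D_add_phi1D (x y : ℝ) :
    phi2D x y + phi1D x y =
      -32 * (sin (2 * (π * (y / √3))) * sin (π * (x - y / √3)) * sin (π * (x + y / √3))
        * (cos (π * (x / 3 + y / √3)) * cos (π * (x / 3 - y / √3)) * cos (π * (2 * x / 3)))) := by
  have h3 : √3 * y = 3 * (y / √3) := by
    field_simp
    rw [Real.sq_sqrt (by norm_num)]
    ring
  have h := sum_sin_eq_prod (π * x / 3) (π * (y / √3))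
  unfold phi2D phi1D
  rw [mul_assoc 3 √3 y, h3, mul_div_assoc (4 * π) y √3]
  generalize y / √3 = t at *
  ring_nf at h ⊢
  linarith

/-- A cosine at an angle in `(-π/2, 3π/2)` vanishes only at `π/2`. -/
theorem cos_pi_mul_eq_zero_iff {a : ℝ} (h₁ : -(1 / 2) < a) (h₂ : a < 3 / 2) :
    cos (π * a) = 0 ↔ a = 1 / 2 := by
  have hπ := Real.pi_pos
  constructor
  · intro h
    rcases lt_trichotomy a (1 / 2) with ha | ha | ha
    · exact absurd h (cos_pos_of_mem_Ioo ⟨by nlinarith, by nlinarith⟩).ne'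
    · exact ha
    · exact absurd h (cos_neg_of_pi_div_two_lt_of_lt (by nlinarith) (by nlinarith)).ne
  · rintro rfl
    rw [mul_one_div, cos_pi_div_two]

/-- Inside the triangle the nodal set consists of two line segments. -/
theorem phi2D_add_phi1D_ne_zero_iff {x y : ℝ} (hp : (x, y) ∈ openTriangle) :
    phi2D x y + phi1D x y ≠ 0 ↔ x ≠ 3 / 4 ∧ x + 3 * (y / √3) ≠ 3 / 2 := by
  obtain ⟨h1, h2, h3⟩ := hp
  simp only at h1 h2 h3
  have hs : 0 < √3 := by positivity
  have ht : 0 < y / √3 := div_pos h1 hs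
  have htx : y / √3 < x := (div_lt_iff₀' hs).2 h2
  rw [phi2D_add_phi1D]
  generalize y / √3 = t at *
  have hπ := Real.pi_pos
  have s1 : sin (2 * (π * t)) ≠ 0 := (sin_pos_of_pos_of_lt_pi (by positivity) (by nlinarith)).ne'
  have s2 : sin (π * (x - t)) ≠ 0 := (sin_pos_of_pos_of_lt_pi (by nlinarith) (by nlinarith)).ne'
  have s3 : sin (π * (x + t)) ≠ 0 := (sin_pos_of_pos_of_lt_pi (by nlinarith) (by nlinarith)).ne'
  have c2 : cos (π * (x / 3 - t)) ≠ 0 := by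
    rw [Ne, cos_pi_mul_eq_zero_iff (by linarith) (by linarith)]
    intro h
    linarith
  have c1 : cos (π * (x / 3 + t)) = 0 ↔ x + 3 * t = 3 / 2 := by
    rw [cos_pi_mul_eq_zero_iff (by linarith) (by linarith)]
    constructor <;> intro h <;> linarith
  have c3 : cos (π * (2 * x / 3)) = 0 ↔ x = 3 / 4 := by
    rw [cos_pi_mul_eq_zero_iff (by linarith) (by linarith)]
    constructor <;> intro h <;> linarith
  simp [s1, s2, s3, c2, c1, c3, and_comm]

theorem isOpen_halfPlane (a b c : ℝ) : IsOpen {p : ℝ × ℝ | a * p.1 + b * p.2 < c} :=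
  isOpen_lt (by fun_prop) continuous_const

theorem convex_halfPlane (a b c : ℝ) : Convex ℝ {p : ℝ × ℝ | a * p.1 + b * p.2 < c} :=
  convex_halfSpace_lt (f := fun p : ℝ × ℝ => a * p.1 + b * p.2)
    ⟨fun p q => by simp only [Prod.fst_add, Prod.snd_add]; ring,
      fun r p => by simp only [Prod.smul_fst, Prod.smul_snd, smul_eq_mul]; ring⟩ c

theorem openTriangle_eq_inter :
    openTriangle = {p : ℝ × ℝ | 0 * p.1 + (-1) * p.2 < 0} ∩
      ({p : ℝ × ℝ | (-√3) * p.1 + 1 * p.2 < 0} ∩ {p : ℝ × ℝ | 1 * p.1 + (√3)⁻¹ * p.2 < 1}) := by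
  ext p
  simp only [openTriangle, Set.mem_ofPred_eq, Set.mem_inter_iff, div_eq_inv_mul]
  refine and_congr ?_ (and_congr ?_ ?_) <;> constructor <;> intro h <;> linarith

theorem isOpen_openTriangle : IsOpen openTriangle := by
  rw [openTriangle_eq_inter]
  exact (isOpen_halfPlane _ _ _).inter ((isOpen_halfPlane _ _ _).inter (isOpen_halfPlane _ _ _))

theorem convex_openTriangle : Convex ℝ openTriangle := by
  rw [openTriangle_eq_inter]
  exact (convex_halfPlane _ _ _).inter ((convex_halfPlane _ _ _).inter (convex_halfPlane _ _ _))

/-- The three nodal domains of `phi2D + phi1D`. -/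
def nodalDomain : Fin 3 → Set (ℝ × ℝ) :=
  ![openTriangle ∩ {p | (-1) * p.1 + 0 * p.2 < -(3 / 4)},
    openTriangle ∩ {p | (-1) * p.1 + (-(3 / √3)) * p.2 < -(3 / 2)},
    openTriangle ∩ ({p | 1 * p.1 + 0 * p.2 < 3 / 4} ∩ {p | 1 * p.1 + (3 / √3) * p.2 < 3 / 2})]

theorem isOpen_nodalDomain (i : Fin 3) : IsOpen (nodalDomain i) := by
  fin_cases i
  · exact isOpen_openTriangle.inter (isOpen_halfPlane _ _ _)
  · exact isOpen_openTriangle.inter (isOpen_halfPlane _ _ _)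
  · exact isOpen_openTriangle.inter ((isOpen_halfPlane _ _ _).inter (isOpen_halfPlane _ _ _))

theorem convex_nodalDomain (i : Fin 3) : Convex ℝ (nodalDomain i) := by
  fin_cases i
  · exact convex_openTriangle.inter (convex_halfPlane _ _ _)
  · exact convex_openTriangle.inter (convex_halfPlane _ _ _)
  · exact convex_openTriangle.inter ((convex_halfPlane _ _ _).inter (convex_halfPlane _ _ _))

theorem mem_nodalDomain_zero {p : ℝ × ℝ} :
    p ∈ nodalDomain 0 ↔ p ∈ openTriangle ∧ 3 / 4 < p.1 := by
  refine and_congr Iff.rfl ?_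
  simp only [Set.mem_ofPred_eq]
  constructor <;> intro h <;> linarith

theorem mem_nodalDomain_one {p : ℝ × ℝ} :
    p ∈ nodalDomain 1 ↔ p ∈ openTriangle ∧ 3 / 2 < p.1 + 3 * (p.2 / √3) := by
  refine and_congr Iff.rfl ?_
  simp only [Set.mem_ofPred_eq]
  have : 3 / √3 * p.2 = 3 * (p.2 / √3) := by ring
  constructor <;> intro h <;> linarith

theorem mem_nodalDomain_two {p : ℝ × ℝ} :
    p ∈ nodalDomain 2 ↔ p ∈ openTriangle ∧ p.1 < 3 / 4 ∧ p.1 + 3 * (p.2 / √3) < 3 / 2 := by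
  refine and_congr Iff.rfl (and_congr ?_ ?_) <;> simp only [Set.mem_ofPred_eq]
  · constructor <;> intro h <;> linarith
  · have : 3 / √3 * p.2 = 3 * (p.2 / √3) := by ring
    constructor <;> intro h <;> linarith

theorem nodalDomain_nonempty (i : Fin 3) : (nodalDomain i).Nonempty := by
  have hs : 0 < √3 := by positivity
  have hmem : ∀ {x t : ℝ}, 0 < t → t < x → x + t < 1 → (x, √3 * t) ∈ openTriangle :=
    fun h1 h2 h3 => ⟨mul_pos hs h1, mul_lt_mul_of_pos_left h2 hs, by
      simpa only [mul_div_cancel_left₀ _ hs.ne'] using h3⟩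
  fin_cases i
  · exact ⟨(4 / 5, √3 * (1 / 10)), mem_nodalDomain_zero.2
      ⟨hmem (by norm_num) (by norm_num) (by norm_num), by norm_num⟩⟩
  · refine ⟨(1 / 2, √3 * (2 / 5)), mem_nodalDomain_one.2
      ⟨hmem (by norm_num) (by norm_num) (by norm_num), ?_⟩⟩
    simp only [mul_div_cancel_left₀ _ hs.ne']
    norm_num
  · refine ⟨(1 / 2, √3 * (1 / 10)), mem_nodalDomain_two.2
      ⟨hmem (by norm_num) (by norm_num) (by norm_num), by norm_num, ?_⟩⟩
    simp only [mul_div_cancel_left₀ _ hs.ne']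
    norm_num

theorem pairwise_disjoint_nodalDomain :
    Pairwise fun i j => Disjoint (nodalDomain i) (nodalDomain j) := by
  have h01 : Disjoint (nodalDomain 0) (nodalDomain 1) := Set.disjoint_left.2 fun p h h' => by
    obtain ⟨⟨-, -, h1⟩, h2⟩ := mem_nodalDomain_zero.1 h
    linarith [(mem_nodalDomain_one.1 h').2]
  have h02 : Disjoint (nodalDomain 0) (nodalDomain 2) := Set.disjoint_left.2 fun p h h' => by
    linarith [(mem_nodalDomain_zero.1 h).2, (mem_nodalDomain_two.1 h').2.1]
  have h12 : Disjoint (nodalDomain 1) (nodalDomain 2) := Set.disjoint_left.2 fun p h h' => by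
    linarith [(mem_nodalDomain_one.1 h).2, (mem_nodalDomain_two.1 h').2.2]
  intro i j hij
  fin_cases i <;> fin_cases j
  exacts [absurd rfl hij, h01, h02, h01.symm, absurd rfl hij, h12, h02.symm, h12.symm,
    absurd rfl hij]

theorem setOf_phi2D_add_phi1D_ne_zero :
    {p ∈ openTriangle | phi2D p.1 p.2 + phi1D p.1 p.2 ≠ 0} = ⋃ i, nodalDomain i := by
  ext p
  have hfin : (∃ i, p ∈ nodalDomain i) ↔
      p ∈ nodalDomain 0 ∨ p ∈ nodalDomain 1 ∨ p ∈ nodalDomain 2 := by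
    simp [Fin.exists_fin_succ]
  rw [Set.mem_iUnion, hfin, mem_nodalDomain_zero, mem_nodalDomain_one, mem_nodalDomain_two,
    ← and_or_left, ← and_or_left]
  refine and_congr_right fun hp => ?_
  rw [phi2D_add_phi1D_ne_zero_iff hp]
  constructor
  · rintro ⟨h1, h2⟩
    rcases h1.lt_or_gt with h1 | h1
    · rcases h2.lt_or_gt with h2 | h2
      · exact Or.inr (Or.inr ⟨h1, h2⟩)
      · exact Or.inr (Or.inl h2)
    · exact Or.inl h1
  · obtain ⟨-, -, h3⟩ := hp
    rintro (h | h | ⟨h, h'⟩)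
    · exact ⟨h.ne', by linarith⟩
    · exact ⟨by linarith, h.ne'⟩
    · exact ⟨h.ne, h'.ne⟩

/-- The linear combination `φ₂ᵈ + φ₁ᵈ` of the first two Dirichlet eigenfunctions of the
equilateral triangle has exactly `3` nodal domains, contradicting the Extended
Courant Property (the Courant bound is `κ = 2`). -/
theorem three_nodal_domains_phi2D_plus_phi1D :
    Nat.card (ConnectedComponents
      ↥{p ∈ openTriangle | phi2D p.1 p.2 + phi1D p.1 p.2 ≠ 0}) = 3 := by
  rw [card_connectedComponents_iUnion nodalDomain setOf_phi2D_add_phi1D_ne_zero isOpen_nodalDomain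
    (fun i => ⟨nodalDomain_nonempty i, (convex_nodalDomain i).isPreconnected⟩)
    pairwise_disjoint_nodalDomain, Nat.card_fin]
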